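/- Let ρ be a polynomial weight on ℝ^d, 𝔹 a real Banach space, and 0 ≤ α ≤ γ ≤ 2. Then there is a constant C = C(d, α, γ, φ, ρ) > 0 such that for every f : ℝ^d → 𝔹 with ‖f‖_{C^γ_ρ} < ∞ and every integer n ≥ 1, the mollification f_n := f * φ_n satisfies ‖f_n − f‖_{C^α_ρ} ≤ C·n^{α−γ}·‖f‖_{C^γ_ρ}. -/

import Mathlib

open scoped ENNReal

noncomputable section

/-- A polynomial weight: an everywhere positive function comparable to `(1 + ‖x‖) ^ r`
for some real exponent `r`. -/
def IsPolyWeight {E : Type*} [NormedAddCommGroup E] (ρ : E → ℝ) : Prop :=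
  (∀ x, 0 < ρ x) ∧
  ∃ r c C : ℝ, 0 < c ∧ c ≤ C ∧
    ∀ x, c * (1 + ‖x‖) ^ r ≤ ρ x ∧ ρ x ≤ C * (1 + ‖x‖) ^ r

/-- Supremum of `‖g‖` over the unit ball centered at `x`, valued in `ℝ≥0∞`. -/
def ballSup {d : ℕ} {F : Type*} [NormedAddCommGroup F]
    (g : EuclideanSpace ℝ (Fin d) → F) (x : EuclideanSpace ℝ (Fin d)) : ℝ≥0∞ :=
  ⨆ y ∈ Metric.ball x 1, (‖g y‖₊ : ℝ≥0∞)

/-- Hölder seminorm of exponent `σ` of `g` over the unit ball centered at `x`. -/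
def ballHolderSemi {d : ℕ} {F : Type*} [NormedAddCommGroup F]
    (σ : ℝ) (g : EuclideanSpace ℝ (Fin d) → F) (x : EuclideanSpace ℝ (Fin d)) : ℝ≥0∞ :=
  ⨆ y ∈ Metric.ball x 1, ⨆ y' ∈ Metric.ball x 1, ⨆ _ : y ≠ y',
    ENNReal.ofReal (‖g y - g y'‖ / ‖y - y'‖ ^ σ)

/-- The `C^{k+σ}`-norm of `f` on the unit ball centered at `x`: the sum of the sup norms of
the iterated Fréchet derivatives of order `0,…,k` plus (when `σ > 0`) the `σ`-Hölder
seminorm of the `k`-th derivative. -/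
def ballCNorm {d : ℕ} {𝔹 : Type*} [NormedAddCommGroup 𝔹] [NormedSpace ℝ 𝔹]
    (k : ℕ) (σ : ℝ) (f : EuclideanSpace ℝ (Fin d) → 𝔹) (x : EuclideanSpace ℝ (Fin d)) :
    ℝ≥0∞ :=
  (∑ j ∈ Finset.range (k + 1), ballSup (iteratedFDeriv ℝ j f) x)
    + (if 0 < σ then ballHolderSemi σ (iteratedFDeriv ℝ k f) x else 0)

/-- Weighted Hölder norm `‖f‖_{C^{k+σ}_ρ} = sup_x ρ(x)⁻¹ ‖f‖_{C^{k+σ}(B₁(x))}`. -/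
def wNorm {d : ℕ} {𝔹 : Type*} [NormedAddCommGroup 𝔹] [NormedSpace ℝ 𝔹]
    (ρ : EuclideanSpace ℝ (Fin d) → ℝ) (k : ℕ) (σ : ℝ)
    (f : EuclideanSpace ℝ (Fin d) → 𝔹) : ℝ≥0∞ :=
  ⨆ x : EuclideanSpace ℝ (Fin d), (ENNReal.ofReal (ρ x))⁻¹ * ballCNorm k σ f x

/-- Weighted Hölder norm of real order `γ ≥ 0`, splitting `γ = ⌊γ⌋ + (γ - ⌊γ⌋)`. -/
def wNormE {d : ℕ} {𝔹 : Type*} [NormedAddCommGroup 𝔹] [NormedSpace ℝ 𝔹]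
    (ρ : EuclideanSpace ℝ (Fin d) → ℝ) (γ : ℝ)
    (f : EuclideanSpace ℝ (Fin d) → 𝔹) : ℝ≥0∞ :=
  wNorm ρ ⌊γ⌋₊ (γ - ⌊γ⌋₊) f

open MeasureTheory in
/-- Mollification `f_n = f * φ_n` with `φ_n(x) = n^d φ(n x)`. -/
def mollify {d : ℕ} {𝔹 : Type*} [NormedAddCommGroup 𝔹] [NormedSpace ℝ 𝔹]
    [CompleteSpace 𝔹] (φ : EuclideanSpace ℝ (Fin d) → ℝ) (n : ℕ)
    (f : EuclideanSpace ℝ (Fin d) → 𝔹) (x : EuclideanSpace ℝ (Fin d)) : 𝔹 :=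
  ∫ y : EuclideanSpace ℝ (Fin d), ((n : ℝ) ^ d * φ ((n : ℝ) • y)) • f (x - y)

/-!
The error `f * φ_n - f` is the average of the increments `f (x - y) - f x` over the law of a small
centred random shift `y`, of size `O(1 / n)`. Averaging commutes with differentiation. If a function
has Hölder order `θ ≤ 1`, its increments over a distance `1 / n` are `O(n ^ (-θ))`; if `θ ≤ 2`, the
linear Taylor term is killed because the shift is centred, and the average is again `O(n ^ (-θ))`.
This bounds the derivatives of the error up to order `⌊α⌋`. Its Hölder seminorm follows by
interpolation: points farther apart than `1 / n` are handled by the sup bound, closer ones by the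
regularity of the error itself. Everything is local at scale `1`, where a polynomial weight is
constant up to a factor.
-/

open MeasureTheory Metric

lemma le_mul_rpow_mul_rpow_of_le_of_le {a B δ r s θ τ : ℝ} (hB : 0 ≤ B) (hδ : 0 < δ) (hr : 0 ≤ r)
    (hτ : 0 ≤ τ) (hτs : τ ≤ s) (hsup : a ≤ B * δ ^ θ) (hinc : a ≤ B * (δ ^ (θ - s) * r ^ s)) :
    a ≤ B * (δ ^ (θ - τ) * r ^ τ) := by
  rcases le_total δ r with hfar | hnear
  · calc a ≤ B * δ ^ θ := hsup
      _ = B * (δ ^ (θ - τ) * δ ^ τ) := by rw [← Real.rpow_add hδ, sub_add_cancel]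
      _ ≤ B * (δ ^ (θ - τ) * r ^ τ) := by gcongr
  · calc a ≤ B * (δ ^ (θ - s) * r ^ s) := hinc
      _ = B * (δ ^ (θ - s) * (r ^ (s - τ) * r ^ τ)) := by
        rw [← Real.rpow_add_of_nonneg hr (sub_nonneg.mpr hτs) hτ, sub_add_cancel]
      _ ≤ B * (δ ^ (θ - s) * (δ ^ (s - τ) * r ^ τ)) := by
        have := sub_nonneg.mpr hτs
        gcongr
      _ = B * (δ ^ (θ - τ) * r ^ τ) := by
        rw [← mul_assoc (δ ^ _), ← Real.rpow_add hδ, sub_add_sub_cancel]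

lemma rpow_le_sq_mul_rpow {δ R p q : ℝ} (hδ : 0 < δ) (hδR : δ ≤ R) (hR : 1 ≤ R) (hqp : q ≤ p)
    (hpq : p ≤ q + 2) : δ ^ p ≤ R ^ 2 * δ ^ q := by
  have := sub_nonneg.mpr hqp
  calc δ ^ p = δ ^ (p - q) * δ ^ q := by rw [← Real.rpow_add hδ, sub_add_cancel]
    _ ≤ R ^ (p - q) * δ ^ q := by gcongr
    _ ≤ R ^ (2 : ℝ) * δ ^ q := by
        gcongr
        linarith
    _ = R ^ 2 * δ ^ q := by rw [Real.rpow_two]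

section MeanIncrement

variable {E F G : Type*} [NormedAddCommGroup E] [MeasurableSpace E]
  [NormedAddCommGroup F] {ν : Measure E} {δ B : ℝ} {g : E → F} {x y : E}

lemma integrable_comp_sub_left [BorelSpace E] [ProperSpace E] [IsFiniteMeasure ν]
    (hν : ∀ᵐ y ∂ν, ‖y‖ ≤ δ) (hg : Continuous g) (x : E) :
    Integrable (fun y => g (x - y)) ν := by
  have hcont : Continuous fun y => g (x - y) := by fun_prop
  obtain ⟨B, hB⟩ :=
    (isCompact_closedBall (0 : E) δ).exists_bound_of_continuousOn hcont.continuousOn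
  exact .of_bound hcont.aestronglyMeasurable B
    (hν.mono fun y hy => hB y (mem_closedBall_zero_iff.mpr hy))

lemma integrable_increment [BorelSpace E] [ProperSpace E] [IsFiniteMeasure ν]
    (hν : ∀ᵐ y ∂ν, ‖y‖ ≤ δ) (hg : Continuous g) (x : E) :
    Integrable (fun y => g (x - y) - g x) ν :=
  (integrable_comp_sub_left hν hg x).sub (integrable_const _)

variable [NormedSpace ℝ F] [NormedAddCommGroup G] [NormedSpace ℝ G]

/-- The `ν`-average of the increments `g (x - y) - g x`. For a probability measure `ν` this is
the error `ν * g - g` made when `g` is smoothed by convolution with `ν`. -/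
def meanIncrement (ν : Measure E) (g : E → F) (x : E) : F :=
  ∫ y, (g (x - y) - g x) ∂ν

lemma meanIncrement_comp_linearIsometryEquiv (L : F ≃ₗᵢ[ℝ] G) :
    meanIncrement ν (L ∘ g) = L ∘ meanIncrement ν g := by
  funext x
  have := L.toContinuousLinearEquiv.integral_comp_comm (μ := ν) fun y => g (x - y) - g x
  simpa only [meanIncrement, Function.comp_apply, LinearIsometryEquiv.coe_toContinuousLinearEquiv,
    map_sub] using this

lemma norm_meanIncrement_le [IsProbabilityMeasure ν] (hν : ∀ᵐ y ∂ν, ‖y‖ ≤ δ)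
    (hB : ∀ z ∈ closedBall x δ, ‖g z - g x‖ ≤ B) : ‖meanIncrement ν g x‖ ≤ B := by
  simpa [meanIncrement] using norm_integral_le_of_norm_le_const (μ := ν)
    (hν.mono fun y hy => hB (x - y) (by simpa using hy))

lemma norm_meanIncrement_sub_le [BorelSpace E] [ProperSpace E] [IsProbabilityMeasure ν]
    (hν : ∀ᵐ y ∂ν, ‖y‖ ≤ δ) (hδ : 0 ≤ δ) (hg : Continuous g)
    (hB : ∀ z, ‖z‖ ≤ δ → ‖g (y - z) - g (x - z)‖ ≤ B) :
    ‖meanIncrement ν g y - meanIncrement ν g x‖ ≤ 2 * B := by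
  have hBz (z : E) (hz : ‖z‖ ≤ δ) : ‖g (y - z) - g y - (g (x - z) - g x)‖ ≤ 2 * B := by
    have hB₀ := hB 0 (by simpa using hδ)
    rw [sub_zero, sub_zero] at hB₀
    rw [sub_sub_sub_comm]
    linarith [norm_sub_le (g (y - z) - g (x - z)) (g y - g x), hB z hz]
  rw [meanIncrement, meanIncrement, ← integral_sub (integrable_increment hν hg y)
    (integrable_increment hν hg x)]
  simpa using norm_integral_le_of_norm_le_const (μ := ν) (hν.mono hBz)

variable [NormedSpace ℝ E] [BorelSpace E] [ProperSpace E]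

/-- Taylor expansion to first order: the linear term averages out because `ν` is centred. -/
lemma norm_meanIncrement_le_of_fderiv [IsProbabilityMeasure ν] (hν : ∀ᵐ y ∂ν, ‖y‖ ≤ δ)
    (hν₀ : ∫ y, y ∂ν = 0) (hδ : 0 ≤ δ) (hg : Differentiable ℝ g)
    (hB : ∀ z ∈ closedBall x δ, ‖fderiv ℝ g z - fderiv ℝ g x‖ ≤ B) :
    ‖meanIncrement ν g x‖ ≤ B * δ := by
  set L := fderiv ℝ g x
  have hid : Integrable (fun y : E => y) ν := .of_bound continuous_id.aestronglyMeasurable δ hν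
  have hlin : ∫ y, L y ∂ν = 0 := by
    by_cases hF : CompleteSpace F
    · rw [L.integral_comp_comm hid, hν₀, map_zero]
    · simp [integral, hF]
  have htaylor : ∀ y, ‖y‖ ≤ δ → ‖g (x - y) - g x + L y‖ ≤ B * δ := fun y hy => by
    have hmem : x - y ∈ closedBall x δ := by simpa using hy
    have hB₀ : 0 ≤ B := (norm_nonneg _).trans (hB x (mem_closedBall_self hδ))
    calc ‖g (x - y) - g x + L y‖ = ‖g (x - y) - g x - L (x - y - x)‖ := by
          rw [sub_sub_cancel_left, map_neg, sub_neg_eq_add]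
      _ ≤ B * ‖x - y - x‖ := (convex_closedBall x δ).norm_image_sub_le_of_norm_fderiv_le'
          (fun z _ => hg z) hB (mem_closedBall_self hδ) hmem
      _ ≤ B * δ := by
          rw [sub_sub_cancel_left, norm_neg]
          gcongr
  have hsplit : meanIncrement ν g x = ∫ y, (g (x - y) - g x + L y) ∂ν := by
    rw [integral_add (integrable_increment hν hg.continuous x) (L.integrable_comp hid), hlin,
      add_zero, meanIncrement]
  rw [hsplit]
  simpa using norm_integral_le_of_norm_le_const (μ := ν) (hν.mono htaylor)

lemma hasFDerivAt_meanIncrement [IsFiniteMeasure ν] (hν : ∀ᵐ y ∂ν, ‖y‖ ≤ δ)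
    (hg : ContDiff ℝ 1 g) (x : E) :
    HasFDerivAt (meanIncrement ν g) (meanIncrement ν (fderiv ℝ g) x) x := by
  have hg' : Continuous (fderiv ℝ g) := hg.continuous_fderiv one_ne_zero
  have hd : Differentiable ℝ g := hg.differentiable one_ne_zero
  obtain ⟨B, hB⟩ :=
    (isCompact_closedBall x (1 + δ)).exists_bound_of_continuousOn hg'.continuousOn
  refine hasFDerivAt_integral_of_dominated_of_fderiv_le (bound := fun _ => B + B)
    (F' := fun z y => fderiv ℝ g (z - y) - fderiv ℝ g z) (ball_mem_nhds x one_pos)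
    (.of_forall fun z => (integrable_increment hν hg.continuous z).aestronglyMeasurable)
    (integrable_increment hν hg.continuous x)
    (integrable_increment hν hg' x).aestronglyMeasurable (hν.mono fun y hy z hz => ?_)
    (integrable_const _) (.of_forall fun y z _ => ?_)
  · have hz' : ‖z - x‖ < 1 := mem_ball_iff_norm.mp hz
    refine (norm_sub_le _ _).trans (add_le_add (hB _ ?_) (hB _ ?_)) <;>
      rw [mem_closedBall_iff_norm]
    · rw [sub_right_comm]
      linarith [norm_sub_le (z - x) y]
    · linarith [(norm_nonneg y).trans hy]
  · exact ((hd (z - y)).hasFDerivAt.comp z ((hasFDerivAt_id z).sub_const y)).sub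
      (hd z).hasFDerivAt

lemma fderiv_meanIncrement [IsFiniteMeasure ν] (hν : ∀ᵐ y ∂ν, ‖y‖ ≤ δ) (hg : ContDiff ℝ 1 g) :
    fderiv ℝ (meanIncrement ν g) = meanIncrement ν (fderiv ℝ g) :=
  funext fun x => (hasFDerivAt_meanIncrement hν hg x).fderiv

lemma iteratedFDeriv_meanIncrement [IsFiniteMeasure ν] (hν : ∀ᵐ y ∂ν, ‖y‖ ≤ δ) {j : ℕ}
    (hg : ContDiff ℝ j g) :
    iteratedFDeriv ℝ j (meanIncrement ν g) = meanIncrement ν (iteratedFDeriv ℝ j g) := by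
  induction j with
  | zero => simp only [iteratedFDeriv_zero_eq_comp, meanIncrement_comp_linearIsometryEquiv]
  | succ j ih =>
    have hgj : ContDiff ℝ 1 (iteratedFDeriv ℝ j g) :=
      hg.iteratedFDeriv_right (by push_cast; rw [add_comm])
    rw [iteratedFDeriv_succ_eq_comp_left, ih (hg.of_le (by exact_mod_cast j.le_succ)),
      fderiv_meanIncrement hν hgj, iteratedFDeriv_succ_eq_comp_left]
    exact (meanIncrement_comp_linearIsometryEquiv (ν := ν) (F := E →L[ℝ] E [×j]→L[ℝ] F)
      (G := E [×(j + 1)]→L[ℝ] F)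
      (continuousMultilinearCurryLeftEquiv ℝ (fun _ => E) F).symm).symm

end MeanIncrement

section Holder

variable {E F : Type*} [NormedAddCommGroup E] [NormedAddCommGroup F]
  {U V : Set E} {A B s θ σ τ δ R : ℝ} {g : E → F}

/-- Hölder continuity of exponent `s` on `U` with constant `A`. This is `HolderOnWith` with real
parameters; for `s = 0` it bounds the oscillation of `g` on `U`. -/
def IncrementBoundOn (A s : ℝ) (g : E → F) (U : Set E) : Prop :=
  ∀ y ∈ U, ∀ z ∈ U, ‖g y - g z‖ ≤ A * ‖y - z‖ ^ s

lemma IncrementBoundOn.mono (h : IncrementBoundOn A s g U) (hAB : A ≤ B) :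
    IncrementBoundOn B s g U := fun y hy z hz =>
  (h y hy z hz).trans (by gcongr)

lemma IncrementBoundOn.norm_sub_le_of_mem_closedBall {x : E} (h : IncrementBoundOn A s g U)
    (hs : 0 ≤ s) (hA : 0 ≤ A) (hδ : 0 ≤ δ) (hx : closedBall x δ ⊆ U) :
    ∀ z ∈ closedBall x δ, ‖g z - g x‖ ≤ A * δ ^ s := fun z hz =>
  (h z (hx hz) x (hx (mem_closedBall_self hδ))).trans <| by
    have := mem_closedBall_iff_norm.mp hz
    gcongr

variable [NormedSpace ℝ E] [NormedSpace ℝ F] {f : E → F} {j k l : ℕ}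

lemma IncrementBoundOn.fderiv_iteratedFDeriv
    (h : IncrementBoundOn A s (iteratedFDeriv ℝ (j + 1) f) U) :
    IncrementBoundOn A s (fderiv ℝ (iteratedFDeriv ℝ j f)) U := fun y hy z hz => by
  have := h y hy z hz
  rwa [iteratedFDeriv_succ_eq_comp_left, Function.comp_apply, Function.comp_apply,
    ← dist_eq_norm, LinearIsometryEquiv.dist_map, dist_eq_norm] at this

/-- `g` has Hölder order `θ ∈ [0, 2]` on `U`, with constant `A`: either `g` itself is Hölder of
exponent `θ`, or its derivative is Hölder of exponent `θ - 1`. Order `1` may be realised either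
way: by a Lipschitz bound, or by a `C¹` function whose derivative has bounded oscillation. -/
inductive HasHolderOrderOn (A : ℝ) (g : E → F) (U : Set E) : ℝ → Prop
  | of_increment {s : ℝ} (hs : 0 ≤ s) (h : IncrementBoundOn A s g U) : HasHolderOrderOn A g U s
  | of_fderiv {s : ℝ} (hs : 0 ≤ s) (hg : ContDiff ℝ 1 g)
      (h : IncrementBoundOn A s (fderiv ℝ g) U) : HasHolderOrderOn A g U (1 + s)

/-- The derivatives of `f` up to order `k` are bounded by `B` on `U`, and so is the `σ`-Hölder
seminorm of the last one when `σ > 0`. This is the real-valued counterpart of `ballCNorm`. -/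
structure HolderBoundOn (k : ℕ) (σ B : ℝ) (f : E → F) (U : Set E) : Prop where
  norm_le : ∀ j ≤ k, ∀ y ∈ U, ‖iteratedFDeriv ℝ j f y‖ ≤ B
  incrementBoundOn : 0 < σ → IncrementBoundOn B σ (iteratedFDeriv ℝ k f) U

namespace HolderBoundOn

lemma nonneg (h : HolderBoundOn k σ B f U) {y : E} (hy : y ∈ U) : 0 ≤ B :=
  (norm_nonneg _).trans (h.norm_le 0 k.zero_le y hy)

lemma of_forall_ball (h : ∀ y ∈ U, HolderBoundOn k σ B f (ball y 1)) :
    HolderBoundOn k σ (2 * B) f U := by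
  have hsup (j : ℕ) (hj : j ≤ k) (y : E) (hy : y ∈ U) : ‖iteratedFDeriv ℝ j f y‖ ≤ B :=
    (h y hy).norm_le j hj y (mem_ball_self one_pos)
  have hB (y : E) (hy : y ∈ U) : 0 ≤ B := (h y hy).nonneg (mem_ball_self one_pos)
  refine ⟨fun j hj y hy => (hsup j hj y hy).trans (by linarith [hB y hy]), fun hσ y hy z hz => ?_⟩
  have hBy := hB y hy
  rcases lt_or_ge ‖y - z‖ 1 with hnear | hfar
  · refine ((h z hz).incrementBoundOn hσ).mono (by linarith) y ?_ z (mem_ball_self one_pos)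
    exact mem_ball_iff_norm.mpr hnear
  · calc ‖iteratedFDeriv ℝ k f y - iteratedFDeriv ℝ k f z‖ ≤ B + B :=
          (norm_sub_le _ _).trans (add_le_add (hsup k le_rfl y hy) (hsup k le_rfl z hz))
      _ = 2 * B := (two_mul B).symm
      _ ≤ 2 * B * ‖y - z‖ ^ σ :=
          le_mul_of_one_le_right (by positivity) (Real.one_le_rpow hfar hσ.le)

lemma incrementBoundOn_iteratedFDeriv (h : HolderBoundOn k σ B f U) (hσ : 0 ≤ σ) :
    IncrementBoundOn (2 * B) σ (iteratedFDeriv ℝ k f) U := by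
  intro y hy z hz
  rcases hσ.eq_or_lt with rfl | hσ
  · rw [Real.rpow_zero, mul_one, two_mul]
    exact (norm_sub_le _ _).trans (add_le_add (h.norm_le k le_rfl y hy) (h.norm_le k le_rfl z hz))
  · exact (h.incrementBoundOn hσ).mono (by linarith [h.nonneg hy]) y hy z hz

lemma incrementBoundOn_one_iteratedFDeriv (h : HolderBoundOn k σ B f U) (hU : Convex ℝ U)
    (hf : ContDiff ℝ k f) (hj : j < k) : IncrementBoundOn B 1 (iteratedFDeriv ℝ j f) U := by
  intro y hy z hz
  rw [Real.rpow_one]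
  refine hU.norm_image_sub_le_of_norm_fderiv_le
    (fun w _ => hf.differentiable_iteratedFDeriv (by exact_mod_cast hj) w) (fun w hw => ?_) hz hy
  rw [norm_fderiv_iteratedFDeriv]
  exact h.norm_le (j + 1) hj w hw

lemma hasHolderOrderOn_iteratedFDeriv (h : HolderBoundOn k σ B f U) (hU : Convex ℝ U)
    (hf : ContDiff ℝ k f) (hσ : 0 ≤ σ) (hk : k + σ ≤ 2) (hj : j ≤ k) :
    HasHolderOrderOn (2 * B) (iteratedFDeriv ℝ j f) U (k + σ - j) := by
  have hk2 : k ≤ 2 := by exact_mod_cast (by linarith : (k : ℝ) ≤ 2)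
  have hC1 (hjk : j + 1 ≤ k) : ContDiff ℝ 1 (iteratedFDeriv ℝ j f) :=
    hf.iteratedFDeriv_right (by rw [add_comm]; exact_mod_cast hjk)
  obtain rfl | rfl | ⟨rfl, rfl⟩ : j = k ∨ k = j + 1 ∨ (j = 0 ∧ k = 2) := by omega
  · rw [add_sub_cancel_left]
    exact .of_increment hσ (h.incrementBoundOn_iteratedFDeriv hσ)
  · rw [show ((j + 1 : ℕ) : ℝ) + σ - j = 1 + σ by push_cast; ring]
    exact .of_fderiv hσ (hC1 le_rfl) (h.incrementBoundOn_iteratedFDeriv hσ).fderiv_iteratedFDeriv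
  · obtain rfl : σ = 0 := by push_cast at hk; linarith
    rw [show ((2 : ℕ) : ℝ) + 0 - (0 : ℕ) = 1 + 1 by norm_num]
    refine .of_fderiv zero_le_one (hC1 one_le_two) fun y hy => ?_
    have hB : B ≤ 2 * B := by linarith [h.nonneg hy]
    exact ((h.incrementBoundOn_one_iteratedFDeriv hU hf one_lt_two).mono hB).fderiv_iteratedFDeriv
      y hy

end HolderBoundOn

variable [MeasurableSpace E] [BorelSpace E] [ProperSpace E] {ν : Measure E}
  [IsProbabilityMeasure ν] {x : E}

lemma HasHolderOrderOn.norm_meanIncrement_le_rpow (h : HasHolderOrderOn A g U θ) (hA : 0 ≤ A)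
    (hν : ∀ᵐ y ∂ν, ‖y‖ ≤ δ) (hν₀ : ∫ y, y ∂ν = 0) (hδ : 0 < δ) (hx : closedBall x δ ⊆ U) :
    ‖meanIncrement ν g x‖ ≤ A * δ ^ θ := by
  cases h with
  | of_increment hs h =>
    exact norm_meanIncrement_le hν (h.norm_sub_le_of_mem_closedBall hs hA hδ.le hx)
  | of_fderiv hs hg h =>
    rw [add_comm, Real.rpow_add_one hδ.ne', ← mul_assoc]
    exact norm_meanIncrement_le_of_fderiv hν hν₀ hδ.le (hg.differentiable one_ne_zero)
      (h.norm_sub_le_of_mem_closedBall hs hA hδ.le hx)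

lemma HasHolderOrderOn.incrementBoundOn_meanIncrement (h : HasHolderOrderOn A g U θ) (hA : 0 ≤ A)
    (hg : Continuous g) (hν : ∀ᵐ y ∂ν, ‖y‖ ≤ δ) (hν₀ : ∫ y, y ∂ν = 0) (hδ : 0 < δ)
    (hV : Convex ℝ V) (hVU : ∀ v ∈ V, closedBall v δ ⊆ U) (hτ : 0 ≤ τ) (hτ1 : τ ≤ 1)
    (hτθ : τ ≤ θ) :
    IncrementBoundOn (2 * A * δ ^ (θ - τ)) τ (meanIncrement ν g) V := by
  intro y hy x hx
  have hsup : ‖meanIncrement ν g y - meanIncrement ν g x‖ ≤ 2 * A * δ ^ θ := by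
    linarith [norm_sub_le (meanIncrement ν g y) (meanIncrement ν g x),
      h.norm_meanIncrement_le_rpow hA hν hν₀ hδ (hVU y hy),
      h.norm_meanIncrement_le_rpow hA hν hν₀ hδ (hVU x hx)]
  rw [mul_assoc (2 * A)]
  cases h with
  | of_increment hs h =>
    refine le_mul_rpow_mul_rpow_of_le_of_le (by positivity) hδ (norm_nonneg _) hτ hτθ hsup ?_
    rw [sub_self, Real.rpow_zero, one_mul, mul_assoc]
    refine norm_meanIncrement_sub_le hν hδ.le hg fun z hz => ?_
    simpa using h (y - z) (hVU y hy (by simpa using hz)) (x - z) (hVU x hx (by simpa using hz))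
  | @of_fderiv s hs hg h =>
    refine le_mul_rpow_mul_rpow_of_le_of_le (by positivity) hδ (norm_nonneg _) hτ hτ1 hsup ?_
    have hfderiv : ∀ v ∈ V, ‖fderiv ℝ (meanIncrement ν g) v‖ ≤ A * δ ^ s := fun v hv => by
      rw [fderiv_meanIncrement hν hg]
      exact (HasHolderOrderOn.of_increment hs h).norm_meanIncrement_le_rpow hA hν hν₀ hδ (hVU v hv)
    calc ‖meanIncrement ν g y - meanIncrement ν g x‖ ≤ A * δ ^ s * ‖y - x‖ :=
          hV.norm_image_sub_le_of_norm_fderiv_le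
            (fun v _ => (hasFDerivAt_meanIncrement hν hg v).differentiableAt) hfderiv hx hy
      _ ≤ 2 * (A * δ ^ s * ‖y - x‖) := le_mul_of_one_le_left (by positivity) one_le_two
      _ = 2 * A * (δ ^ (1 + s - 1) * ‖y - x‖ ^ (1 : ℝ)) := by
          rw [Real.rpow_one, add_sub_cancel_left]
          ring

lemma HolderBoundOn.holderBoundOn_meanIncrement (h : HolderBoundOn k σ B f U) (hU : Convex ℝ U)
    (hf : ContDiff ℝ k f) (hσ : 0 ≤ σ) (hk : k + σ ≤ 2) (hν : ∀ᵐ y ∂ν, ‖y‖ ≤ δ)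
    (hν₀ : ∫ y, y ∂ν = 0) (hδ : 0 < δ) (hδR : δ ≤ R) (hR : 1 ≤ R) (hV : Convex ℝ V)
    (hVU : ∀ v ∈ V, closedBall v δ ⊆ U) (hlk : l ≤ k) (hτ : 0 ≤ τ) (hτ1 : τ ≤ 1)
    (hlτ : l + τ ≤ k + σ) :
    HolderBoundOn l τ (4 * R ^ 2 * B * δ ^ (k + σ - (l + τ))) (meanIncrement ν f) V := by
  have hB (v : E) (hv : v ∈ V) : 0 ≤ B := h.nonneg (hVU v hv (mem_closedBall_self hδ.le))
  have horder (j : ℕ) (hj : j ≤ l) := h.hasHolderOrderOn_iteratedFDeriv hU hf hσ hk (hj.trans hlk)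
  have hderiv (j : ℕ) (hj : j ≤ l) := iteratedFDeriv_meanIncrement hν
    (hf.of_le (by exact_mod_cast hj.trans hlk) : ContDiff ℝ j f)
  refine ⟨fun j hj v hv => ?_, fun _ v hv => ?_⟩
  · have hBv := hB v hv
    have hjl : (j : ℝ) ≤ l := by exact_mod_cast hj
    rw [hderiv j hj]
    calc ‖meanIncrement ν (iteratedFDeriv ℝ j f) v‖ ≤ 2 * B * δ ^ (k + σ - j) :=
          (horder j hj).norm_meanIncrement_le_rpow (by positivity) hν hν₀ hδ (hVU v hv)
      _ ≤ 2 * B * (R ^ 2 * δ ^ (k + σ - (l + τ))) := by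
          gcongr
          exact rpow_le_sq_mul_rpow hδ hδR hR (by linarith)
            (by linarith [j.cast_nonneg (α := ℝ)])
      _ ≤ 4 * R ^ 2 * B * δ ^ (k + σ - (l + τ)) := by
          have : 0 ≤ B * R ^ 2 * δ ^ (k + σ - (l + τ)) := by positivity
          linarith
  · have hBv := hB v hv
    rw [hderiv l le_rfl]
    refine ((horder l le_rfl).incrementBoundOn_meanIncrement (by positivity)
      (hf.continuous_iteratedFDeriv (by exact_mod_cast hlk)) hν hν₀ hδ hV hVU hτ hτ1
      (by linarith)).mono ?_ v hv
    rw [sub_sub]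
    have hR2 : 1 ≤ R ^ 2 := one_le_pow₀ hR
    exact mul_le_mul_of_nonneg_right (by nlinarith) (by positivity)

end Holder

section Weight

/-- A moderate weight: an everywhere positive function whose values at points within a bounded
distance are comparable, which is what a translation-invariant local estimate needs of a weight. -/
structure IsModerateWeight {E : Type*} [NormedAddCommGroup E] (ρ : E → ℝ) : Prop where
  pos : ∀ x, 0 < ρ x
  exists_le_mul : ∀ R ≥ 0, ∃ K > 0, ∀ x y, ‖y - x‖ ≤ R → ρ y ≤ K * ρ x

lemma one_add_norm_rpow_le {E : Type*} [NormedAddCommGroup E] {R : ℝ} (r : ℝ) {x y : E}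
    (hxy : ‖y - x‖ ≤ R) : (1 + ‖y‖) ^ r ≤ (1 + R) ^ |r| * (1 + ‖x‖) ^ r := by
  have hR : 0 ≤ R := (norm_nonneg _).trans hxy
  have hyx : 1 + ‖y‖ ≤ (1 + R) * (1 + ‖x‖) := by
    nlinarith [norm_le_norm_add_norm_sub' y x, norm_nonneg x]
  have hxy' : 1 + ‖x‖ ≤ (1 + R) * (1 + ‖y‖) := by
    nlinarith [norm_le_norm_add_norm_sub y x, norm_nonneg y]
  rcases le_total 0 r with hr | hr
  · rw [abs_of_nonneg hr, ← Real.mul_rpow (by positivity) (by positivity)]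
    exact Real.rpow_le_rpow (by positivity) hyx hr
  · rw [abs_of_nonpos hr, Real.rpow_neg (by positivity),
      ← Real.inv_rpow (by positivity), ← Real.mul_rpow (by positivity) (by positivity)]
    refine Real.rpow_le_rpow_of_nonpos (by positivity) ?_ hr
    rwa [inv_mul_le_iff₀ (by positivity)]

lemma IsPolyWeight.isModerateWeight {E : Type*} [NormedAddCommGroup E] {ρ : E → ℝ}
    (hρ : IsPolyWeight ρ) : IsModerateWeight ρ := by
  obtain ⟨hpos, r, c, C, hc, hcC, h⟩ := hρ
  have hC : 0 < C := hc.trans_le hcC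
  refine ⟨hpos, fun R hR => ⟨C * (1 + R) ^ |r| / c, by positivity, fun x y hxy => ?_⟩⟩
  calc ρ y ≤ C * (1 + ‖y‖) ^ r := (h y).2
    _ ≤ C * ((1 + R) ^ |r| * (1 + ‖x‖) ^ r) := by
        gcongr
        exact one_add_norm_rpow_le r hxy
    _ = C * (1 + R) ^ |r| / c * (c * (1 + ‖x‖) ^ r) := by field_simp
    _ ≤ C * (1 + R) ^ |r| / c * ρ x := by
        gcongr
        exact (h x).1

end Weight

section WeightedNorm

variable {d : ℕ} {F : Type*} [NormedAddCommGroup F] [NormedSpace ℝ F]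
  {ρ : EuclideanSpace ℝ (Fin d) → ℝ} {k l : ℕ} {σ τ B δ K M R : ℝ}
  {f : EuclideanSpace ℝ (Fin d) → F} {x : EuclideanSpace ℝ (Fin d)}

lemma wNorm_le_ofReal_iff (hρ : ∀ x, 0 < ρ x) :
    wNorm ρ k σ f ≤ ENNReal.ofReal M ↔ ∀ x, ballCNorm k σ f x ≤ ENNReal.ofReal (M * ρ x) := by
  refine iSup_le_iff.trans (forall_congr' fun x => ?_)
  rw [ENNReal.inv_mul_le_iff (by simpa using hρ x) ENNReal.ofReal_ne_top,
    ENNReal.ofReal_mul' (hρ x).le, mul_comm]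

lemma HolderBoundOn.of_ballCNorm_le (h : ballCNorm k σ f x ≤ ENNReal.ofReal B) (hB : 0 ≤ B) :
    HolderBoundOn k σ B f (ball x 1) := by
  refine ⟨fun j hj y hy => ?_, fun hσ y hy z hz => ?_⟩
  · rw [← ENNReal.ofReal_le_ofReal_iff hB, ofReal_norm]
    calc ‖iteratedFDeriv ℝ j f y‖ₑ ≤ ballSup (iteratedFDeriv ℝ j f) x :=
          le_iSup₂ (f := fun y (_ : y ∈ ball x 1) => ‖iteratedFDeriv ℝ j f y‖ₑ) y hy
      _ ≤ ∑ j ∈ Finset.range (k + 1), ballSup (iteratedFDeriv ℝ j f) x :=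
          Finset.single_le_sum (f := fun j => ballSup (iteratedFDeriv ℝ j f) x)
            (fun _ _ => zero_le) (Finset.mem_range_succ_iff.mpr hj)
      _ ≤ ballCNorm k σ f x := le_self_add
      _ ≤ ENNReal.ofReal B := h
  · rcases eq_or_ne y z with rfl | hyz
    · simp only [sub_self, norm_zero]
      positivity
    rw [← div_le_iff₀ (Real.rpow_pos_of_pos (norm_sub_pos_iff.mpr hyz) _),
      ← ENNReal.ofReal_le_ofReal_iff hB]
    calc _ ≤ ballHolderSemi σ (iteratedFDeriv ℝ k f) x :=
          le_iSup₂_of_le y hy (le_iSup₂_of_le z hz (le_iSup_of_le hyz le_rfl))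
      _ ≤ ballCNorm k σ f x := by
          rw [ballCNorm, if_pos hσ]
          exact le_add_self
      _ ≤ ENNReal.ofReal B := h

lemma HolderBoundOn.ballCNorm_le (h : HolderBoundOn k σ B f (ball x 1)) :
    ballCNorm k σ f x ≤ ENNReal.ofReal ((k + 2) * B) := by
  have hsup : ∀ j ∈ Finset.range (k + 1),
      ballSup (iteratedFDeriv ℝ j f) x ≤ ENNReal.ofReal B := fun j hj =>
    iSup₂_le fun y hy => by
      rw [← enorm_eq_nnnorm, ← ofReal_norm]
      exact ENNReal.ofReal_le_ofReal (h.norm_le j (Finset.mem_range_succ_iff.mp hj) y hy)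
  have hsemi : (if 0 < σ then ballHolderSemi σ (iteratedFDeriv ℝ k f) x else 0)
      ≤ ENNReal.ofReal B := by
    split_ifs with hσ
    · refine iSup₂_le fun y hy => iSup₂_le fun z hz => iSup_le fun hyz =>
        ENNReal.ofReal_le_ofReal ?_
      rw [div_le_iff₀ (Real.rpow_pos_of_pos (norm_sub_pos_iff.mpr hyz) _)]
      exact h.incrementBoundOn hσ y hy z hz
    · exact zero_le
  calc ballCNorm k σ f x ≤ (k + 1) • ENNReal.ofReal B + ENNReal.ofReal B := by
        refine add_le_add ?_ hsemi
        simpa only [Finset.card_range] using Finset.sum_le_card_nsmul _ _ _ hsup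
    _ = (k + 2) • ENNReal.ofReal B := (succ_nsmul _ _).symm
    _ = ENNReal.ofReal ((k + 2) * B) := by
        rw [← ENNReal.ofReal_nsmul, nsmul_eq_mul]
        push_cast
        rfl

lemma wNorm_meanIncrement_le {ν : Measure (EuclideanSpace ℝ (Fin d))} [IsProbabilityMeasure ν]
    (hρ : ∀ x, 0 < ρ x) (hK₀ : 0 < K) (hK : ∀ x y, ‖y - x‖ ≤ 1 + R → ρ y ≤ K * ρ x)
    (hν : ∀ᵐ y ∂ν, ‖y‖ ≤ δ) (hν₀ : ∫ y, y ∂ν = 0) (hδ : 0 < δ) (hδR : δ ≤ R) (hR : 1 ≤ R)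
    (hσ : 0 ≤ σ) (hk : k + σ ≤ 2) (hlk : l ≤ k) (hτ : 0 ≤ τ) (hτ1 : τ ≤ 1)
    (hlτ : l + τ ≤ k + σ) (hf : ContDiff ℝ k f) :
    wNorm ρ l τ (meanIncrement ν f)
      ≤ ENNReal.ofReal ((l + 2) * (8 * R ^ 2 * K) * δ ^ (k + σ - (l + τ))) * wNorm ρ k σ f := by
  have hC : 0 < (l + 2) * (8 * R ^ 2 * K) * δ ^ (k + σ - (l + τ)) := by positivity
  obtain htop | ⟨M, hM, hfM⟩ : wNorm ρ k σ f = ⊤ ∨ ∃ M ≥ 0, wNorm ρ k σ f = ENNReal.ofReal M :=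
    or_iff_not_imp_left.mpr fun h => ⟨_, ENNReal.toReal_nonneg, (ENNReal.ofReal_toReal h).symm⟩
  · rw [htop, ENNReal.mul_top (by simpa using hC)]
    exact le_top
  rw [hfM, ← ENNReal.ofReal_mul hC.le]
  refine (wNorm_le_ofReal_iff hρ).mpr fun x => ?_
  have hlocal : ∀ y ∈ closedBall x (1 + R), HolderBoundOn k σ (M * (K * ρ x)) f (ball y 1) := by
    intro y hy
    have hρy := hK x y (mem_closedBall_iff_norm.mp hy)
    exact .of_ballCNorm_le (((wNorm_le_ofReal_iff hρ).mp hfM.le y).trans (by gcongr))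
      (mul_nonneg hM ((hρ y).le.trans hρy))
  have hball := (HolderBoundOn.of_forall_ball hlocal).holderBoundOn_meanIncrement
    (convex_closedBall x (1 + R)) hf hσ hk hν hν₀ hδ hδR hR (convex_ball x 1)
    (fun v hv => closedBall_subset_closedBall' (by linarith [mem_ball.mp hv])) hlk hτ hτ1 hlτ
  refine hball.ballCNorm_le.trans_eq (congrArg ENNReal.ofReal ?_)
  ring

end WeightedNorm

section Density

variable {X F : Type*} [MeasurableSpace X] {μ : Measure X} {ψ : X → ℝ} [NormedAddCommGroup F]
  [NormedSpace ℝ F]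

lemma isProbabilityMeasure_withDensity_ofReal (hψ : ∀ x, 0 ≤ ψ x) (hψint : ∫ x, ψ x ∂μ = 1) :
    IsProbabilityMeasure (μ.withDensity fun x => ENNReal.ofReal (ψ x)) := by
  rw [isProbabilityMeasure_iff, withDensity_apply _ .univ, Measure.restrict_univ,
    ← ofReal_integral_eq_lintegral_ofReal (.of_integral_ne_zero (hψint ▸ one_ne_zero))
      (.of_forall hψ), hψint, ENNReal.ofReal_one]

lemma integral_withDensity_ofReal (hψ : ∀ x, 0 ≤ ψ x) (hψm : AEMeasurable ψ μ) (g : X → F) :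
    ∫ x, g x ∂μ.withDensity (fun x => ENNReal.ofReal (ψ x)) = ∫ x, ψ x • g x ∂μ := by
  rw [integral_withDensity_eq_integral_toReal_smul₀ hψm.ennreal_ofReal
    (.of_forall fun _ => ENNReal.ofReal_lt_top)]
  simp only [ENNReal.toReal_ofReal (hψ _)]

lemma integral_eq_zero_of_odd [AddGroup X] [MeasurableNeg X] [μ.IsNegInvariant] {g : X → F}
    (hg : Function.Odd g) : ∫ x, g x ∂μ = 0 := by
  have := IsAddTorsionFree.of_isTorsionFree ℝ F
  refine self_eq_neg.mp ?_
  calc ∫ x, g x ∂μ = ∫ x, g (-x) ∂μ := (integral_neg_eq_self g μ).symm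
    _ = -∫ x, g x ∂μ := by rw [← integral_neg, funext hg]

end Density

section Mollifier

variable {d n : ℕ} {φ : EuclideanSpace ℝ (Fin d) → ℝ}

/-- The measure with density `φ_n(y) = n ^ d * φ (n • y)`, against which `mollify φ n`
averages. -/
def mollifierMeasure (φ : EuclideanSpace ℝ (Fin d) → ℝ) (n : ℕ) :
    Measure (EuclideanSpace ℝ (Fin d)) :=
  volume.withDensity fun y => ENNReal.ofReal ((n : ℝ) ^ d * φ ((n : ℝ) • y))

lemma integral_rescale_smul {F : Type*} [NormedAddCommGroup F] [NormedSpace ℝ F] (hn : n ≠ 0)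
    (g : EuclideanSpace ℝ (Fin d) → F) :
    ∫ y, ((n : ℝ) ^ d * φ ((n : ℝ) • y)) • g ((n : ℝ) • y) = ∫ y, φ y • g y := by
  have hnd : (0 : ℝ) < n ^ d := by positivity
  simp only [mul_smul]
  rw [integral_smul, Measure.integral_comp_smul volume (fun y => φ y • g y),
    finrank_euclideanSpace_fin, abs_of_pos (inv_pos.mpr hnd), smul_inv_smul₀ hnd.ne']

lemma integral_rescale (hn : n ≠ 0) :
    ∫ y, (n : ℝ) ^ d * φ ((n : ℝ) • y) = ∫ y, φ y := by
  simpa only [smul_eq_mul, mul_one] using integral_rescale_smul (φ := φ) hn fun _ => (1 : ℝ)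

lemma integral_mollifierMeasure {F : Type*} [NormedAddCommGroup F] [NormedSpace ℝ F]
    (hφ : ∀ x, 0 ≤ φ x) (hφint : ∫ x, φ x = 1) (hn : n ≠ 0) (g : EuclideanSpace ℝ (Fin d) → F) :
    ∫ y, g y ∂mollifierMeasure φ n = ∫ y, ((n : ℝ) ^ d * φ ((n : ℝ) • y)) • g y := by
  have hint := (integral_rescale hn).trans hφint
  have hm := (Integrable.of_integral_ne_zero (hint ▸ one_ne_zero)).aemeasurable
  exact integral_withDensity_ofReal (fun y => mul_nonneg (by positivity) (hφ _)) hm g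

lemma isProbabilityMeasure_mollifierMeasure (hφ : ∀ x, 0 ≤ φ x) (hφint : ∫ x, φ x = 1)
    (hn : n ≠ 0) : IsProbabilityMeasure (mollifierMeasure φ n) :=
  isProbabilityMeasure_withDensity_ofReal (fun y => mul_nonneg (by positivity) (hφ _))
    ((integral_rescale hn).trans hφint)

lemma integral_id_mollifierMeasure (hφ : ∀ x, 0 ≤ φ x) (hφint : ∫ x, φ x = 1) (hn : n ≠ 0)
    (hφ₀ : ∫ x, φ x • x = 0) : ∫ y, y ∂mollifierMeasure φ n = 0 := by
  have hn₀ : (n : ℝ) ≠ 0 := by exact_mod_cast hn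
  have := integral_rescale_smul (φ := φ) hn fun y => (n : ℝ)⁻¹ • y
  simp only [inv_smul_smul₀ hn₀, smul_comm _ (n : ℝ)⁻¹, integral_smul, hφ₀, smul_zero] at this
  rw [integral_mollifierMeasure hφ hφint hn, this]

lemma ae_norm_le_mollifierMeasure {R : ℝ} (hφint : ∫ x, φ x = 1) (hn : n ≠ 0)
    (hR : ∀ x, φ x ≠ 0 → ‖x‖ ≤ R) : ∀ᵐ y ∂mollifierMeasure φ n, ‖y‖ ≤ R / n := by
  have hn₀ : (0 : ℝ) < n := by positivity
  have hint := (integral_rescale hn).trans hφint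
  have hm := (Integrable.of_integral_ne_zero (hint ▸ one_ne_zero)).aemeasurable
  refine (ae_withDensity_iff' hm.ennreal_ofReal).mpr (.of_forall fun y hy => ?_)
  have hφy : φ ((n : ℝ) • y) ≠ 0 := fun h => hy (by simp [h])
  have hRy := hR _ hφy
  rwa [norm_smul, Real.norm_of_nonneg hn₀.le, ← le_div_iff₀' hn₀] at hRy

lemma mollify_sub_eq_meanIncrement {F : Type*} [NormedAddCommGroup F] [NormedSpace ℝ F]
    [CompleteSpace F] {f : EuclideanSpace ℝ (Fin d) → F} {R : ℝ} (hφ : ∀ x, 0 ≤ φ x)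
    (hφint : ∫ x, φ x = 1) (hR : ∀ x, φ x ≠ 0 → ‖x‖ ≤ R) (hn : n ≠ 0) (hf : Continuous f) :
    (fun x => mollify φ n f x - f x) = meanIncrement (mollifierMeasure φ n) f := by
  have := isProbabilityMeasure_mollifierMeasure hφ hφint hn
  funext x
  rw [meanIncrement, integral_sub (integrable_comp_sub_left
    (ae_norm_le_mollifierMeasure hφint hn hR) hf x) (integrable_const _),
    integral_mollifierMeasure hφ hφint hn, integral_const, probReal_univ, one_smul, mollify]

theorem mollify_approx_general {𝔹 : Type*} [NormedAddCommGroup 𝔹] [NormedSpace ℝ 𝔹]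
    [CompleteSpace 𝔹] {ρ : EuclideanSpace ℝ (Fin d) → ℝ} (hρ : IsModerateWeight ρ) {α γ : ℝ}
    (hα : 0 ≤ α) (hαγ : α ≤ γ) (hγ : γ ≤ 2) (hφsupp : HasCompactSupport φ)
    (hφ : ∀ x, 0 ≤ φ x) (hφint : ∫ x, φ x = 1) (hφ₀ : ∫ x, φ x • x = 0) :
    ∃ C : ℝ, 0 < C ∧ ∀ f : EuclideanSpace ℝ (Fin d) → 𝔹, ContDiff ℝ ⌊γ⌋₊ f →
      ∀ n : ℕ, 1 ≤ n →
        wNormE ρ α (fun x => mollify φ n f x - f x)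
          ≤ ENNReal.ofReal (C * (n : ℝ) ^ (α - γ)) * wNormE ρ γ f := by
  obtain ⟨R, hR, hφR⟩ : ∃ R, 1 ≤ R ∧ ∀ x, φ x ≠ 0 → ‖x‖ ≤ R := by
    obtain ⟨R, hR⟩ := hφsupp.isCompact.isBounded.exists_norm_le
    exact ⟨max 1 R, le_max_left _ _, fun x hx => (hR x (subset_tsupport φ hx)).trans
      (le_max_right _ _)⟩
  obtain ⟨K, hK₀, hK⟩ := hρ.exists_le_mul (1 + R) (by positivity)
  refine ⟨(⌊α⌋₊ + 2) * (8 * R ^ 2 * K) * R ^ (γ - α), by positivity, fun f hf n hn => ?_⟩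
  have hn₀ : n ≠ 0 := by omega
  have hδR : R / n ≤ R := div_le_self (by positivity) (by exact_mod_cast hn)
  have hpow : (R / n) ^ (⌊γ⌋₊ + (γ - ⌊γ⌋₊) - (⌊α⌋₊ + (α - ⌊α⌋₊)))
      = R ^ (γ - α) * (n : ℝ) ^ (α - γ) := by
    rw [add_sub_cancel, add_sub_cancel, Real.div_rpow (by positivity) (by positivity),
      ← neg_sub γ α, Real.rpow_neg (by positivity), div_eq_mul_inv]
  have := isProbabilityMeasure_mollifierMeasure hφ hφint hn₀
  rw [mollify_sub_eq_meanIncrement hφ hφint hφR hn₀ hf.continuous, mul_assoc _ (R ^ _), ← hpow]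
  exact wNorm_meanIncrement_le hρ.pos hK₀ hK (ae_norm_le_mollifierMeasure hφint hn₀ hφR)
    (integral_id_mollifierMeasure hφ hφint hn₀ hφ₀) (by positivity) hδR hR
    (sub_nonneg.mpr (Nat.floor_le (hα.trans hαγ))) (by linarith) (Nat.floor_mono hαγ)
    (sub_nonneg.mpr (Nat.floor_le hα)) (by linarith [Nat.lt_floor_add_one α]) (by linarith) hf

end Mollifier

/-- Approximation estimate for mollifications:
`‖f_n − f‖_{C^α_ρ} ≤ C n^{α−γ} ‖f‖_{C^γ_ρ}` for `0 ≤ α ≤ γ ≤ 2`. -/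
theorem mollify_approx {d : ℕ} {𝔹 : Type*} [NormedAddCommGroup 𝔹] [NormedSpace ℝ 𝔹]
    [CompleteSpace 𝔹]
    (ρ : EuclideanSpace ℝ (Fin d) → ℝ) (hρ : IsPolyWeight ρ)
    (α γ : ℝ) (hα : 0 ≤ α) (hαγ : α ≤ γ) (hγ : γ ≤ 2)
    (φ : EuclideanSpace ℝ (Fin d) → ℝ)
    (hφsmooth : ContDiff ℝ (⊤ : ℕ∞) φ) (hφsupp : HasCompactSupport φ)
    (hφpos : ∀ x, 0 ≤ φ x) (hφint : ∫ x : EuclideanSpace ℝ (Fin d), φ x = 1)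
    (hφsymm : ∀ x, φ (-x) = φ x) :
    ∃ C : ℝ, 0 < C ∧
      ∀ f : EuclideanSpace ℝ (Fin d) → 𝔹,
        ContDiff ℝ (⌊γ⌋₊ : ℕ∞) f → wNormE ρ γ f ≠ ⊤ →
        ∀ n : ℕ, 1 ≤ n →
          wNormE ρ α (fun x => mollify φ n f x - f x)
            ≤ ENNReal.ofReal (C * (n : ℝ) ^ (α - γ)) * wNormE ρ γ f := by
  have hφ₀ : ∫ x, φ x • x = 0 := integral_eq_zero_of_odd fun x => by rw [hφsymm, smul_neg]
  obtain ⟨C, hC, h⟩ := mollify_approx_general (𝔹 := 𝔹) hρ.isModerateWeight hα hαγ hγ hφsupp hφpos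
    hφint hφ₀
  exact ⟨C, hC, fun f hf _ => h f hf⟩
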